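/- For every γ ∈ 𝓜 there exist r > 0 and C > 0 such that the H^s-ball B_r(γ) = { η ∈ H^s(𝕋,ℝⁿ) : ‖η − γ‖_{H^s} < r } is contained in 𝓜 and d_G(γ₁, γ₀) ≤ C · ‖γ₁ − γ₀‖_{H^s} for all γ₀, γ₁ ∈ B_r(γ). Consequently, the identity map (𝓜, d_G) → (𝓜, ‖·‖_{H^s}-distance) is locally bi-Lipschitz. -/

import Mathlib

open MeasureTheory Real Filter Set
open scoped ENNReal Topology RealInnerProductSpace

noncomputable section

/-- Euclidean space `ℝⁿ`. -/
abbrev En (n : ℕ) : Type := EuclideanSpace ℝ (Fin n)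

/-- A fundamental domain for the circle `𝕋 = ℝ/ℤ`. -/
def I01 : Set ℝ := Set.Ico (0 : ℝ) 1

/-- The intrinsic distance on `𝕋 = ℝ/ℤ`, expressed for real representatives. -/
def dT (x y : ℝ) : ℝ := ⨅ k : ℤ, |x - y - (k : ℝ)|

/-- Supremum norm of a (periodic) function on the circle. -/
def supNorm {E : Type*} [NormedAddCommGroup E] (f : ℝ → E) : ℝ := ⨆ x : ℝ, ‖f x‖

/-- The squared Gagliardo seminorm `[v]_{H^σ}²` of a function on the circle, valued in `[0,∞]`. -/
def gagliardoSqE {E : Type*} [NormedAddCommGroup E] (σ : ℝ) (v : ℝ → E) : ℝ≥0∞ :=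
  ∫⁻ x in I01, ∫⁻ y in I01, ENNReal.ofReal (‖v y - v x‖ ^ 2 / dT x y ^ (2 * σ + 1))

/-- Membership in the Sobolev–Slobodeckij space `H^s(𝕋, ℝⁿ)`; for `s ∈ (3/2,2)` such
functions have a `C¹` representative, which we take as the defining data. -/
def InHs {n : ℕ} (s : ℝ) (u : ℝ → En n) : Prop :=
  Function.Periodic u 1 ∧ ContDiff ℝ 1 u ∧ gagliardoSqE (s - 1) (deriv u) < ⊤

/-- The squared `H^s` norm `‖u‖²_{L²} + ‖u'‖²_{L²} + [u']²_{H^{s-1}}`. -/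
def HsNormSq {n : ℕ} (s : ℝ) (u : ℝ → En n) : ℝ :=
  (∫ x in I01, ‖u x‖ ^ 2) + (∫ x in I01, ‖deriv u x‖ ^ 2) +
    (gagliardoSqE (s - 1) (deriv u)).toReal

/-- The `H^s` norm. -/
def HsNorm {n : ℕ} (s : ℝ) (u : ℝ → En n) : ℝ := Real.sqrt (HsNormSq s u)

/-- The `H^s` inner product. -/
def HsInner {n : ℕ} (s : ℝ) (u v : ℝ → En n) : ℝ :=
  (∫ x in I01, ⟪u x, v x⟫) + (∫ x in I01, ⟪deriv u x, deriv v x⟫) +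
    ∫ x in I01, ∫ y in I01,
      ⟪deriv u y - deriv u x, deriv v y - deriv v x⟫ / dT x y ^ (2 * (s - 1) + 1)

/-- The manifold `𝓜` of embedded closed curves of class `H^s`: injective (on the circle)
immersions. -/
def InM {n : ℕ} (s : ℝ) (γ : ℝ → En n) : Prop :=
  InHs s γ ∧ Set.InjOn γ I01 ∧ ∀ x, deriv γ x ≠ 0

/-- The length `L(γ)`. -/
def arcLen {n : ℕ} (γ : ℝ → En n) : ℝ := ∫ x in I01, ‖deriv γ x‖

/-- The arc-length distance `d_γ(x,y)`: the length of the shorter of the two arcs of `γ`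
between `x` and `y`. -/
def arcDist {n : ℕ} (γ : ℝ → En n) (x y : ℝ) : ℝ :=
  ⨅ k : ℤ, |∫ t in x..(y + (k : ℝ)), ‖deriv γ t‖|

/-- Derivative with respect to arc length, `D_γ u = u' / |γ'|`. -/
def Dg {n : ℕ} (γ u : ℝ → En n) (x : ℝ) : En n := ‖deriv γ x‖⁻¹ • deriv u x

/-- `𝒟_γ u (x)`, the pointwise linear map `w ↦ |γ'(x)|⁻² ⟪γ'(x), w⟫ u'(x)`. -/
def DDg {n : ℕ} (γ u : ℝ → En n) (x : ℝ) (w : En n) : En n :=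
  ((‖deriv γ x‖ ^ 2)⁻¹ * ⟪deriv γ x, w⟫) • deriv u x

/-- The operator `R^s_γ`. -/
def Rop {n : ℕ} (s : ℝ) (γ u : ℝ → En n) (x y : ℝ) : En n :=
  (‖γ y - γ x‖ ^ s)⁻¹ • (u y - u x - DDg γ u x (γ y - γ x))

/-- Density of the measure `μ_γ` with respect to `λ ⊗ λ` on `𝕋 × 𝕋`. -/
def muW {n : ℕ} (γ : ℝ → En n) (x y : ℝ) : ℝ :=
  ‖deriv γ x‖ * ‖deriv γ y‖ / ‖γ y - γ x‖

/-- Density of the measure `ν_γ` with respect to `λ ⊗ λ` on `𝕋 × 𝕋`. -/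
def nuW {n : ℕ} (γ : ℝ → En n) (x y : ℝ) : ℝ :=
  ‖deriv γ x‖ * ‖deriv γ y‖ / arcDist γ x y

/-- The tangent-point energy, valued in `[0,∞]`. -/
def EtpE {n : ℕ} (s : ℝ) (γ : ℝ → En n) : ℝ≥0∞ :=
  ∫⁻ x in I01, ∫⁻ y in I01, ENNReal.ofReal (‖Rop s γ γ x y‖ ^ 2 * muW γ x y)

/-- The tangent-point energy, real-valued (finite on `𝓜`). -/
def Etp {n : ℕ} (s : ℝ) (γ : ℝ → En n) : ℝ := (EtpE s γ).toReal

/-- `‖R^s_γ u‖²_{L²(ν_γ)}`, valued in `[0,∞]`. -/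
def RnuSqE {n : ℕ} (s : ℝ) (γ u : ℝ → En n) : ℝ≥0∞ :=
  ∫⁻ x in I01, ∫⁻ y in I01, ENNReal.ofReal (‖Rop s γ u x y‖ ^ 2 * nuW γ x y)

/-- `‖R^s_γ u‖²_{L²(ν_γ)}`, real-valued. -/
def RnuSq {n : ℕ} (s : ℝ) (γ u : ℝ → En n) : ℝ := (RnuSqE s γ u).toReal

/-- The squared `γ`-dependent seminorm `[u]²_{H^s(γ)}`, valued in `[0,∞]`. -/
def gagGammaSqE {n : ℕ} (s : ℝ) (γ u : ℝ → En n) : ℝ≥0∞ :=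
  ∫⁻ x in I01, ∫⁻ y in I01,
    ENNReal.ofReal (‖Dg γ u y - Dg γ u x‖ ^ 2 / arcDist γ x y ^ (2 * (s - 1)) * nuW γ x y)

/-- The squared `γ`-dependent seminorm `[u]²_{H^s(γ)}`, real-valued. -/
def gagGammaSq {n : ℕ} (s : ℝ) (γ u : ℝ → En n) : ℝ := (gagGammaSqE s γ u).toReal

/-- The inner product `⟨u,v⟩_{L²(γ)}`. -/
def innerL2g {n : ℕ} (γ u v : ℝ → En n) : ℝ := ∫ x in I01, ⟪u x, v x⟫ * ‖deriv γ x‖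

/-- The inner product `⟨u,v⟩_{H¹(γ)}`. -/
def innerH1g {n : ℕ} (γ u v : ℝ → En n) : ℝ :=
  ∫ x in I01, ⟪Dg γ u x, Dg γ v x⟫ * ‖deriv γ x‖

/-- The squared `γ`-dependent norm `‖u‖²_{H^s(γ)}`. -/
def HsGammaNormSq {n : ℕ} (s : ℝ) (γ u : ℝ → En n) : ℝ :=
  innerL2g γ u u + innerH1g γ u u + gagGammaSq s γ u

/-- The `γ`-dependent norm `‖u‖_{H^s(γ)}`. -/
def HsGammaNorm {n : ℕ} (s : ℝ) (γ u : ℝ → En n) : ℝ := Real.sqrt (HsGammaNormSq s γ u)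

/-- The bilinear form `B¹_γ`. -/
def B1 {n : ℕ} (s : ℝ) (γ u v : ℝ → En n) : ℝ :=
  ∫ x in I01, ∫ y in I01, ⟪Rop s γ u x y, Rop s γ v x y⟫ * muW γ x y

/-- The bilinear form `B²_γ`. -/
def B2 {n : ℕ} (s : ℝ) (γ u v : ℝ → En n) : ℝ :=
  ∫ x in I01, ∫ y in I01,
    ‖Rop s γ γ x y‖ ^ 2 * (⟪u y - u x, v y - v x⟫ / ‖γ y - γ x‖ ^ 2) * muW γ x y

/-- The bilinear form `B³_γ`. -/
def B3 {n : ℕ} (s : ℝ) (γ u v : ℝ → En n) : ℝ :=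
  ∫ x in I01, ∫ y in I01,
    ‖Rop s γ γ x y‖ ^ 2 * (⟪Dg γ u x, Dg γ v x⟫ + ⟪Dg γ u y, Dg γ v y⟫) * muW γ x y

/-- The Riemannian metric `G_γ(u,v)`. -/
def Gmet {n : ℕ} (s : ℝ) (γ u v : ℝ → En n) : ℝ :=
  2 * B1 s γ u v + (2 * s + 1) * B2 s γ u v + B3 s γ u v + innerH1g γ u v + innerL2g γ u v

/-- The distortion `distor(γ) = sup_{x ≠ y} d_γ(x,y)/|γ(y) − γ(x)|`, valued in `[0,∞]`. -/
def distorE {n : ℕ} (γ : ℝ → En n) : ℝ≥0∞ :=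
  ⨆ (x ∈ I01) (y ∈ I01) (_ : x ≠ y), ENNReal.ofReal (arcDist γ x y / ‖γ y - γ x‖)

/-- The distortion, real-valued. -/
def distor {n : ℕ} (γ : ℝ → En n) : ℝ := (distorE γ).toReal

/-- A `C¹` path `[0,1] → 𝓜 ⊂ H^s(𝕋,ℝⁿ)` (with respect to the `H^s` topology), recorded
together with its velocity field `V`. -/
structure C1Path (s : ℝ) (n : ℕ) where
  Γ : ℝ → ℝ → En n
  V : ℝ → ℝ → En n
  mem : ∀ t ∈ Set.Icc (0 : ℝ) 1, InM s (Γ t)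
  memV : ∀ t ∈ Set.Icc (0 : ℝ) 1, InHs s (V t)
  isDeriv : ∀ t ∈ Set.Icc (0 : ℝ) 1,
    Tendsto (fun h : ℝ => HsNorm s fun x => h⁻¹ • (Γ (t + h) x - Γ t x) - V t x)
      (𝓝[{h : ℝ | t + h ∈ Set.Icc (0 : ℝ) 1 ∧ h ≠ 0}] 0) (𝓝 0)
  contV : ∀ t ∈ Set.Icc (0 : ℝ) 1,
    Tendsto (fun τ : ℝ => HsNorm s fun x => V τ x - V t x) (𝓝[Set.Icc (0 : ℝ) 1] t) (𝓝 0)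

/-- Length of a path with respect to `G`. -/
def pathLen {s : ℝ} {n : ℕ} (P : C1Path s n) : ℝ :=
  ∫ t in (0 : ℝ)..1, Real.sqrt (Gmet s (P.Γ t) (P.V t) (P.V t))

/-- The path (Dirichlet) energy of a path with respect to `G`. -/
def pathEnergy {s : ℝ} {n : ℕ} (P : C1Path s n) : ℝ :=
  (1 / 2) * ∫ t in (0 : ℝ)..1, Gmet s (P.Γ t) (P.V t) (P.V t)

/-- The geodesic distance induced by `G`, valued in `[0,∞]` (`∞` if there is no path). -/
def geodDist (s : ℝ) {n : ℕ} (γ₀ γ₁ : ℝ → En n) : ℝ≥0∞ :=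
  ⨅ (P : C1Path s n) (_ : P.Γ 0 = γ₀ ∧ P.Γ 1 = γ₁), ENNReal.ofReal (pathLen P)

/-- `U ⊆ 𝓜` is bounded with respect to the geodesic distance `d_G`. -/
def GBounded (s : ℝ) {n : ℕ} (U : Set (ℝ → En n)) : Prop :=
  (∀ γ ∈ U, InM s γ) ∧
    ∃ γ₀, InM s γ₀ ∧ ∃ R : ℝ, ∀ γ ∈ U, geodDist s γ γ₀ ≤ ENNReal.ofReal R

/-- Weak convergence in the Hilbert space `H^s(𝕋,ℝⁿ)`. -/
def WeakHsTendsto {n : ℕ} (s : ℝ) (γk : ℕ → ℝ → En n) (γ : ℝ → En n) : Prop :=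
  ∀ v : ℝ → En n, InHs s v →
    Tendsto (fun k => HsInner s (γk k) v) atTop (𝓝 (HsInner s γ v))

/-- Directional derivative of `γ ↦ G_γ(u,v)` at `γ` in direction `w`. -/
def DGdir {n : ℕ} (s : ℝ) (γ w u v : ℝ → En n) : ℝ :=
  deriv (fun t : ℝ => Gmet s (fun x => γ x + t • w x) u v) 0

/-- `F'` is the derivative of the path `F` with respect to the `H^s` norm, on `S`. -/
def IsHsDerivOn {n : ℕ} (s : ℝ) (F F' : ℝ → ℝ → En n) (S : Set ℝ) : Prop :=
  ∀ t ∈ S,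
    Tendsto (fun h : ℝ => HsNorm s fun x => h⁻¹ • (F (t + h) x - F t x) - F' t x)
      (𝓝[{h : ℝ | t + h ∈ S ∧ h ≠ 0}] 0) (𝓝 0)

/-- The path `F` is continuous on `S` with respect to the `H^s` norm. -/
def HsContOn {n : ℕ} (s : ℝ) (F : ℝ → ℝ → En n) (S : Set ℝ) : Prop :=
  ∀ t ∈ S, Tendsto (fun τ : ℝ => HsNorm s fun x => F τ x - F t x) (𝓝[S] t) (𝓝 0)

/-- A solution of the geodesic initial value problem on `[0,∞)`, recorded as a triple
(position `Γ`, velocity `V`, acceleration `W`); the geodesic equation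
`Γ̈ + A_Γ(Γ̇)Γ̇ = 0` is expressed weakly via the Koszul formula for the
Christoffel operator `A`. -/
def GeodesicSol {n : ℕ} (s : ℝ) (γ₀ v₀ : ℝ → En n) (Γ V W : ℝ → ℝ → En n) : Prop :=
  (∀ t ∈ Set.Ici (0 : ℝ), InM s (Γ t) ∧ InHs s (V t) ∧ InHs s (W t)) ∧
  Γ 0 = γ₀ ∧ V 0 = v₀ ∧
  IsHsDerivOn s Γ V (Set.Ici 0) ∧ IsHsDerivOn s V W (Set.Ici 0) ∧
  HsContOn s V (Set.Ici 0) ∧ HsContOn s W (Set.Ici 0) ∧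
  ∀ t ∈ Set.Ici (0 : ℝ), ∀ w : ℝ → En n, InHs s w →
    Gmet s (Γ t) (W t) w + DGdir s (Γ t) (V t) (V t) w
      - (1 / 2) * DGdir s (Γ t) w (V t) (V t) = 0

/-! Since the `H^s` norm is convex, a ball `B_r(γ)` contains the straight segment between any two
of its curves, so it suffices to bound `G_η(w, w) ≤ C ‖w‖²_{H^s}` uniformly over the ball: the
length of the segment is then at most `√C ‖γ₁ - γ₀‖_{H^s}`.

The Sobolev embedding `H^{s-1}(𝕋) ⊂ L^∞` makes a small ball consist of curves satisfying chord-arc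
and speed bounds with common constants. Under such bounds the quadratic form `B¹_η(w, w)` and the
tangent-point energy, which controls `B²` and `B³`, are integrals of first-order Taylor remainders
`|u(x + h) - u(x) - h u'(x)|² / |h|^{2s+1}` of `u = w` and `u = η`. Such a remainder is at most `h²`
times the average of `|u'(x + th) - u'(x)|²` over `t ∈ [0, 1]`, and Hardy's inequality removes the
average, leaving the Gagliardo seminorm of `u'`. -/

section CircleDistance

lemma dT_eq_norm (x y : ℝ) : dT x y = ‖((y - x : ℝ) : UnitAddCircle)‖ := by
  rw [UnitAddCircle.norm_eq]
  refine le_antisymm ((ciInf_le ⟨0, ?_⟩ (-round (y - x))).trans_eq ?_) (le_ciInf fun k => ?_)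
  · rintro _ ⟨k, rfl⟩
    exact abs_nonneg _
  · rw [← abs_neg]
    push_cast
    ring_nf
  · refine (round_le (y - x) (-k)).trans_eq ?_
    rw [← abs_neg]
    push_cast
    ring_nf

lemma dT_nonneg (x y : ℝ) : 0 ≤ dT x y := by
  rw [dT_eq_norm]
  exact norm_nonneg _

lemma dT_comm (x y : ℝ) : dT x y = dT y x := by
  rw [dT_eq_norm, dT_eq_norm, AddCircle.coe_sub, norm_sub_rev, ← AddCircle.coe_sub]

lemma dT_le_abs_sub (x y : ℝ) : dT x y ≤ |y - x| := by
  rw [dT_eq_norm, UnitAddCircle.norm_eq]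
  simpa using round_le (y - x) 0

lemma dT_add_add (a x y : ℝ) : dT (a + x) (a + y) = dT x y := by
  simp only [dT_eq_norm, add_sub_add_left_eq_sub]

lemma periodic_dT (x : ℝ) : Function.Periodic (dT x) 1 := fun y => by
  rw [dT_eq_norm, dT_eq_norm, add_sub_right_comm, AddCircle.coe_add_period]

lemma dT_add_right_of_abs_le {h : ℝ} (hh : |h| ≤ 1 / 2) (x : ℝ) : dT x (x + h) = |h| := by
  rw [dT_eq_norm, add_sub_cancel_left, AddCircle.norm_coe_eq_abs_iff 1 one_ne_zero, abs_one]
  exact hh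

lemma eq_of_dT_eq_zero {x y : ℝ} (hx : x ∈ I01) (hy : y ∈ I01) (h : dT x y = 0) : x = y := by
  rw [dT_eq_norm, norm_eq_zero, AddCircle.coe_sub, sub_eq_zero] at h
  have : Fact ((0 : ℝ) < 1) := ⟨one_pos⟩
  exact (AddCircle.coe_eq_coe_iff_of_mem_Ico (a := 0) (by simpa [I01] using hx)
    (by simpa [I01] using hy)).1 h.symm

lemma measurable_dT : Measurable (Function.uncurry dT) :=
  Measurable.iInf fun k => by fun_prop

lemma exists_abs_eq_dT_of_periodic {α : Type*} {f : ℝ → α} (hf : Function.Periodic f 1)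
    (x y : ℝ) : ∃ h, |h| ≤ 1 / 2 ∧ |h| = dT x y ∧ f (x + h) = f y := by
  refine ⟨y - x - round (y - x), abs_sub_round _, ?_, ?_⟩
  · rw [dT_eq_norm, UnitAddCircle.norm_eq]
  · rw [show x + (y - x - round (y - x)) = y - round (y - x) * 1 by ring]
    exact hf.sub_int_mul_eq _

end CircleDistance

section PeriodicIntegrals

lemma measurableSet_I01 : MeasurableSet I01 := measurableSet_Ico

instance isProbabilityMeasure_restrict_I01 : IsProbabilityMeasure (volume.restrict I01) :=
  ⟨by simp [I01]⟩

lemma integral_I01_eq_intervalIntegral {E : Type*} [NormedAddCommGroup E] [NormedSpace ℝ E]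
    (f : ℝ → E) : ∫ t in I01, f t = ∫ t in (0 : ℝ)..1, f t := by
  rw [I01, integral_Ico_eq_integral_Ioc, intervalIntegral.integral_of_le zero_le_one]

lemma integrableOn_I01_of_continuous {E : Type*} [NormedAddCommGroup E] {f : ℝ → E}
    (hf : Continuous f) : IntegrableOn f I01 :=
  (hf.integrableOn_Icc (a := 0) (b := 1)).mono_set Ico_subset_Icc_self

lemma continuous_integral_I01 {X E : Type*} [TopologicalSpace X] [FirstCountableTopology X]
    [NormedAddCommGroup E] [NormedSpace ℝ E] {F : X → ℝ → E}
    (hF : Continuous (Function.uncurry F)) : Continuous fun x => ∫ t in I01, F x t := by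
  simp only [integral_I01_eq_intervalIntegral]
  exact intervalIntegral.continuous_parametric_intervalIntegral_of_continuous' hF 0 1

lemma lintegral_Ico_add_eq_of_periodic {f : ℝ → ℝ≥0∞} (hf : Function.Periodic f 1) (a x : ℝ) :
    ∫⁻ h in Ico a (a + 1), f (x + h) = ∫⁻ y in I01, f y := by
  have hshift := (measurePreserving_add_left volume x).setLIntegral_comp_preimage_emb
    (measurableEmbedding_addLeft x) f (Ico (x + a) (x + a + 1))
  have hperiod := (isAddFundamentalDomain_Ioc (zero_lt_one' ℝ) (x + a)).setLIntegral_eq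
    (isAddFundamentalDomain_Ioc (zero_lt_one' ℝ) 0) f hf.map_vadd_zmultiples
  simp only [preimage_const_add_Ico, add_sub_cancel_left, add_assoc] at hshift hperiod
  rw [hshift, I01, restrict_Ico_eq_restrict_Ioc, restrict_Ico_eq_restrict_Ioc, hperiod, zero_add]

lemma lintegral_I01_add_eq_of_periodic {f : ℝ → ℝ≥0∞} (hf : Function.Periodic f 1) (x : ℝ) :
    ∫⁻ y in I01, f (x + y) = ∫⁻ y in I01, f y := by
  simpa [I01] using lintegral_Ico_add_eq_of_periodic hf 0 x

lemma integral_I01_add_eq_of_periodic {E : Type*} [NormedAddCommGroup E] [NormedSpace ℝ E]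
    {f : ℝ → E} (hf : Function.Periodic f 1) (x : ℝ) :
    ∫ y in I01, f (x + y) = ∫ y in I01, f y := by
  simp only [integral_I01_eq_intervalIntegral, intervalIntegral.integral_comp_add_left, add_zero]
  simpa using hf.intervalIntegral_add_eq x 0

lemma ofReal_mul_setLIntegral_comp_mul_left_le {a : ℝ} (ha : 0 < a) {S T : Set ℝ}
    (hT : MeasurableSet T) (hTS : MapsTo (a * ·) T S) (f : ℝ → ℝ≥0∞) :
    ENNReal.ofReal a * ∫⁻ t in T, f (a * t) ≤ ∫⁻ t in S, f t := by
  have hchange := lintegral_image_eq_lintegral_abs_deriv_mul hT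
    (fun t _ => (hasDerivAt_const_mul a).hasDerivWithinAt)
    (mul_right_injective₀ ha.ne').injOn f
  rw [abs_of_pos ha, lintegral_const_mul' _ _ ENNReal.ofReal_ne_top] at hchange
  exact hchange ▸ lintegral_mono_set hTS.image_subset

lemma lintegral_lintegral_const_mul_add_const_mul {α β : Type*} [MeasurableSpace α]
    [MeasurableSpace β] {μ : Measure α} {ν : Measure β} [SFinite ν] {f : α → β → ℝ≥0∞}
    (hf : Measurable (Function.uncurry f)) (g : α → β → ℝ≥0∞) {a b : ℝ≥0∞} (ha : a ≠ ∞)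
    (hb : b ≠ ∞) :
    ∫⁻ x, ∫⁻ y, (a * f x y + b * g x y) ∂ν ∂μ =
      a * ∫⁻ x, ∫⁻ y, f x y ∂ν ∂μ + b * ∫⁻ x, ∫⁻ y, g x y ∂ν ∂μ := by
  have hinner (x : α) : ∫⁻ y, (a * f x y + b * g x y) ∂ν =
      a * ∫⁻ y, f x y ∂ν + b * ∫⁻ y, g x y ∂ν := by
    rw [lintegral_add_left (hf.of_uncurry_left.const_mul a), lintegral_const_mul' _ _ ha,
      lintegral_const_mul' _ _ hb]
  simp only [hinner]
  rw [lintegral_add_left (hf.lintegral_prod_right.const_mul a), lintegral_const_mul' _ _ ha,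
    lintegral_const_mul' _ _ hb]

end PeriodicIntegrals

section Jensen

variable {E : Type*} [NormedAddCommGroup E] [NormedSpace ℝ E]

lemma convexOn_univ_norm_sq : ConvexOn ℝ univ fun v : E => ‖v‖ ^ 2 :=
  convexOn_univ_norm.pow (fun _ _ => norm_nonneg _) 2

variable [CompleteSpace E] {α : Type*} [MeasurableSpace α] {μ : Measure α} [IsProbabilityMeasure μ]

lemma sq_norm_integral_le {f : α → E} (hf : Integrable f μ)
    (hf2 : Integrable (fun x => ‖f x‖ ^ 2) μ) : ‖∫ x, f x ∂μ‖ ^ 2 ≤ ∫ x, ‖f x‖ ^ 2 ∂μ :=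
  convexOn_univ_norm_sq.map_integral_le (by fun_prop) isClosed_univ (by simp) hf hf2

lemma ofReal_sq_norm_integral_sub_const_le {f : ℝ → E} (hf : Continuous f) (c : E) :
    ENNReal.ofReal (‖(∫ t in I01, f t) - c‖ ^ 2) ≤
      ∫⁻ t in I01, ENNReal.ofReal (‖f t - c‖ ^ 2) := by
  have hsub : ∫ t in I01, (f t - c) = (∫ t in I01, f t) - c := by
    rw [integral_sub (integrableOn_I01_of_continuous hf) (integrable_const c)]
    simp
  have hsq : IntegrableOn (fun t => ‖f t - c‖ ^ 2) I01 :=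
    integrableOn_I01_of_continuous (by fun_prop)
  rw [← ofReal_integral_eq_lintegral_ofReal hsq (ae_of_all _ fun t => by positivity), ← hsub]
  exact ENNReal.ofReal_le_ofReal
    (sq_norm_integral_le (integrableOn_I01_of_continuous (by fun_prop)) hsq)

lemma ofReal_sq_norm_integral_sub_integral_le {f g : ℝ → E} (hf : Continuous f)
    (hg : Continuous g) :
    ENNReal.ofReal (‖(∫ t in I01, f t) - ∫ t in I01, g t‖ ^ 2) ≤
      ∫⁻ x in I01, ∫⁻ y in I01, ENNReal.ofReal (‖f y - g x‖ ^ 2) := by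
  rw [norm_sub_rev]
  refine (ofReal_sq_norm_integral_sub_const_le hg _).trans (lintegral_mono fun x => ?_)
  rw [norm_sub_rev]
  exact ofReal_sq_norm_integral_sub_const_le hf _

end Jensen

section GagliardoSeminorm

variable {E : Type*} [NormedAddCommGroup E] {σ : ℝ} {v : ℝ → E}

lemma measurable_gagliardo_kernel (hv : Continuous v) (p : ℝ) :
    Measurable (Function.uncurry fun x y => ENNReal.ofReal (‖v y - v x‖ ^ 2 / dT x y ^ p)) := by
  have hnum : Measurable fun z : ℝ × ℝ => ‖v z.2 - v z.1‖ ^ 2 :=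
    Continuous.measurable (by fun_prop)
  exact (hnum.div (measurable_dT.pow_const p)).ennreal_ofReal

lemma periodic_gagliardo_kernel (hv : Function.Periodic v 1) (p x : ℝ) :
    Function.Periodic (fun y => ENNReal.ofReal (‖v y - v x‖ ^ 2 / dT x y ^ p)) 1 := fun y => by
  simp only [hv y, periodic_dT x y]

lemma gagliardoSqE_eq_lintegral_window (hv : Function.Periodic v 1) :
    gagliardoSqE σ v = ∫⁻ x in I01, ∫⁻ h in Ico (-1 / 2 : ℝ) (1 / 2),
      ENNReal.ofReal (‖v (x + h) - v x‖ ^ 2 / |h| ^ (2 * σ + 1)) := by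
  refine lintegral_congr fun x => ?_
  rw [← lintegral_Ico_add_eq_of_periodic (periodic_gagliardo_kernel hv _ x) (-1 / 2) x,
    show (-1 / 2 : ℝ) + 1 = 1 / 2 by norm_num]
  refine setLIntegral_congr_fun measurableSet_Ico fun h hh => ?_
  simp only [dT_add_right_of_abs_le (abs_le.2 ⟨by linarith [hh.1], hh.2.le⟩) x]

lemma gagliardoSqE_comp_add_left (hv : Function.Periodic v 1) (a : ℝ) :
    gagliardoSqE σ (fun x => v (a + x)) = gagliardoSqE σ v := by
  have houter : Function.Periodic
      (fun x => ∫⁻ y in I01, ENNReal.ofReal (‖v y - v x‖ ^ 2 / dT x y ^ (2 * σ + 1))) 1 :=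
    fun x => by simp only [hv x, dT_comm (x + 1), periodic_dT _ x, dT_comm _ x]
  rw [gagliardoSqE, gagliardoSqE, ← lintegral_I01_add_eq_of_periodic houter a]
  refine lintegral_congr fun x => ?_
  rw [← lintegral_I01_add_eq_of_periodic (periodic_gagliardo_kernel hv _ (a + x)) a]
  simp only [dT_add_add]

variable [NormedSpace ℝ E]

lemma gagliardoSqE_const_smul (c : ℝ) (v : ℝ → E) :
    gagliardoSqE σ (c • v) = ENNReal.ofReal (c ^ 2) * gagliardoSqE σ v := by
  simp only [gagliardoSqE]
  rw [← lintegral_const_mul' _ _ ENNReal.ofReal_ne_top]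
  refine lintegral_congr fun x => ?_
  rw [← lintegral_const_mul' _ _ ENNReal.ofReal_ne_top]
  refine lintegral_congr fun y => ?_
  rw [← ENNReal.ofReal_mul (sq_nonneg c), Pi.smul_apply, Pi.smul_apply, ← smul_sub, norm_smul,
    mul_pow, Real.norm_eq_abs, sq_abs, mul_div_assoc]

lemma gagliardoSqE_convex_combination_le {u : ℝ → E} (hu : Continuous u) (v : ℝ → E) {a b : ℝ}
    (ha : 0 ≤ a) (hb : 0 ≤ b) (hab : a + b = 1) :
    gagliardoSqE σ (a • u + b • v) ≤
      ENNReal.ofReal a * gagliardoSqE σ u + ENNReal.ofReal b * gagliardoSqE σ v := by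
  simp only [gagliardoSqE]
  rw [← lintegral_lintegral_const_mul_add_const_mul (measurable_gagliardo_kernel hu _) _
    ENNReal.ofReal_ne_top ENNReal.ofReal_ne_top]
  refine lintegral_mono fun x => lintegral_mono fun y => ?_
  have hd : 0 ≤ dT x y ^ (2 * σ + 1) := rpow_nonneg (dT_nonneg x y) _
  have hconv : ‖(a • u + b • v) y - (a • u + b • v) x‖ ^ 2 ≤
      a * ‖u y - u x‖ ^ 2 + b * ‖v y - v x‖ ^ 2 := by
    have hdiff : (a • u + b • v) y - (a • u + b • v) x =
        a • (u y - u x) + b • (v y - v x) := by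
      simp only [Pi.add_apply, Pi.smul_apply, smul_sub]
      abel
    rw [hdiff]
    exact convexOn_univ_norm_sq.2 (mem_univ _) (mem_univ _) ha hb hab
  rw [← ENNReal.ofReal_mul ha, ← ENNReal.ofReal_mul hb,
    ← ENNReal.ofReal_add (by positivity) (by positivity), ← mul_div_assoc, ← mul_div_assoc,
    ← add_div]
  gcongr

lemma gagliardoSqE_add_lt_top {u : ℝ → E} (hu : Continuous u) (hu' : gagliardoSqE σ u < ∞)
    (hv' : gagliardoSqE σ v < ∞) : gagliardoSqE σ (u + v) < ∞ := by
  have hsum : u + v = (1 / 2 : ℝ) • (2 : ℝ) • u + (1 / 2 : ℝ) • (2 : ℝ) • v := by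
    simp [smul_smul]
  rw [hsum]
  refine (gagliardoSqE_convex_combination_le (hu.const_smul 2) _ (by norm_num) (by norm_num)
    (by norm_num)).trans_lt ?_
  rw [gagliardoSqE_const_smul, gagliardoSqE_const_smul]
  finiteness

end GagliardoSeminorm

section SobolevEmbedding

variable {E : Type*} [NormedAddCommGroup E] {σ : ℝ} {v : ℝ → E}

lemma sq_norm_sub_le_rpow_mul_gagliardo_kernel (v : ℝ → E) {b p x y : ℝ} (hp : 0 ≤ p)
    (hx : x ∈ I01) (hy : y ∈ I01) (hxy : |y - x| ≤ b) :
    ‖v y - v x‖ ^ 2 ≤ b ^ p * (‖v y - v x‖ ^ 2 / dT x y ^ p) := by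
  rcases (dT_nonneg x y).eq_or_lt with h0 | hpos
  · simp [eq_of_dT_eq_zero hx hy h0.symm]
  · have hpow : dT x y ^ p ≤ b ^ p :=
      rpow_le_rpow hpos.le ((dT_le_abs_sub x y).trans hxy) hp
    rw [← mul_div_assoc, le_div_iff₀ (rpow_pos_of_pos hpos p), mul_comm]
    gcongr

lemma mapsTo_const_mul_I01 {b : ℝ} (hb : 0 < b) (hb1 : b ≤ 1) : MapsTo (b * ·) I01 I01 :=
  fun _ ht => ⟨mul_nonneg hb.le ht.1, (mul_le_of_le_one_left ht.1 hb1).trans_lt ht.2⟩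

variable [NormedSpace ℝ E] [CompleteSpace E]

lemma mul_sq_norm_integral_dilation_sub_le (hσ : 0 ≤ 2 * σ + 1) (hv : Continuous v)
    (hfin : gagliardoSqE σ v < ∞) {a b : ℝ} (ha : 0 < a) (hab : a ≤ b) (hb1 : b ≤ 1) :
    a * b * ‖(∫ t in I01, v (b * t)) - ∫ t in I01, v (a * t)‖ ^ 2 ≤
      b ^ (2 * σ + 1) * (gagliardoSqE σ v).toReal := by
  have hb : 0 < b := ha.trans_le hab
  set K : ℝ → ℝ → ℝ≥0∞ := fun x y => ENNReal.ofReal (‖v y - v x‖ ^ 2 / dT x y ^ (2 * σ + 1))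
  have hkernel {x y : ℝ} (hx : x ∈ I01) (hy : y ∈ I01) :
      ENNReal.ofReal (‖v (b * y) - v (a * x)‖ ^ 2) ≤
        ENNReal.ofReal (b ^ (2 * σ + 1)) * K (a * x) (b * y) := by
    rw [← ENNReal.ofReal_mul (by positivity)]
    refine ENNReal.ofReal_le_ofReal (sq_norm_sub_le_rpow_mul_gagliardo_kernel v hσ
      (mapsTo_const_mul_I01 ha (hab.trans hb1) hx) (mapsTo_const_mul_I01 hb hb1 hy) ?_)
    rw [abs_le]
    constructor <;> nlinarith [hx.1, hx.2, hy.1, hy.2]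
  have hdilate : ENNReal.ofReal a * ENNReal.ofReal b *
      ∫⁻ x in I01, ∫⁻ y in I01, K (a * x) (b * y) ≤ gagliardoSqE σ v := by
    rw [mul_assoc, ← lintegral_const_mul' _ _ ENNReal.ofReal_ne_top]
    refine (mul_le_mul_right (lintegral_mono fun x => ofReal_mul_setLIntegral_comp_mul_left_le hb
      measurableSet_I01 (mapsTo_const_mul_I01 hb hb1) (K (a * x))) _).trans ?_
    exact ofReal_mul_setLIntegral_comp_mul_left_le ha measurableSet_I01
      (mapsTo_const_mul_I01 ha (hab.trans hb1)) fun x => ∫⁻ y in I01, K x y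
  have hbound : ENNReal.ofReal a * ENNReal.ofReal b * ENNReal.ofReal
      (‖(∫ t in I01, v (b * t)) - ∫ t in I01, v (a * t)‖ ^ 2) ≤
        ENNReal.ofReal (b ^ (2 * σ + 1)) * gagliardoSqE σ v := by
    refine (mul_le_mul_right ((ofReal_sq_norm_integral_sub_integral_le (by fun_prop)
      (by fun_prop)).trans (setLIntegral_mono' measurableSet_I01 fun x hx =>
        setLIntegral_mono' measurableSet_I01 fun y hy => hkernel hx hy)) _).trans ?_
    simp only [lintegral_const_mul' _ _ ENNReal.ofReal_ne_top]
    rw [mul_left_comm]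
    gcongr
  have hreal := ENNReal.toReal_mono (by finiteness) hbound
  rwa [ENNReal.toReal_mul, ENNReal.toReal_mul, ENNReal.toReal_mul, ENNReal.toReal_ofReal ha.le,
    ENNReal.toReal_ofReal hb.le, ENNReal.toReal_ofReal (by positivity),
    ENNReal.toReal_ofReal (by positivity)] at hreal

lemma dist_integral_dyadic_dilation_le (hσ : 0 ≤ 2 * σ + 1) (hv : Continuous v)
    (hfin : gagliardoSqE σ v < ∞) (k : ℕ) :
    dist (∫ t in I01, v ((1 / 2) ^ k * t)) (∫ t in I01, v ((1 / 2) ^ (k + 1) * t)) ≤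
      √(2 * (gagliardoSqE σ v).toReal) * ((1 / 2) ^ (σ - 1 / 2)) ^ k := by
  set D := (gagliardoSqE σ v).toReal
  have : 0 ≤ D := ENNReal.toReal_nonneg
  set b : ℝ := (1 / 2) ^ k
  have hb : 0 < b := by positivity
  have hb1 : b ≤ 1 := pow_le_one₀ (by norm_num) (by norm_num)
  have hsucc : (1 / 2 : ℝ) ^ (k + 1) = b / 2 := by rw [pow_succ]; ring
  have hstep := mul_sq_norm_integral_dilation_sub_le hσ hv hfin (half_pos hb)
    (half_le_self hb.le) hb1
  have hexp : b ^ (2 * σ + 1) = (b ^ (σ - 1 / 2)) ^ 2 * b ^ 2 := by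
    rw [← rpow_mul_natCast hb.le, ← rpow_natCast b 2, ← rpow_add hb]
    congr 1
    push_cast
    ring
  have hsq : ‖(∫ t in I01, v (b * t)) - ∫ t in I01, v (b / 2 * t)‖ ^ 2 ≤
      2 * D * (b ^ (σ - 1 / 2)) ^ 2 := by
    rw [hexp] at hstep
    refine le_of_mul_le_mul_left ?_ (by positivity : 0 < b / 2 * b)
    linarith
  rw [dist_eq_norm, hsucc, rpow_pow_comm (by norm_num)]
  refine le_of_sq_le_sq (hsq.trans_eq ?_) (by positivity)
  rw [mul_pow, sq_sqrt (by positivity)]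

lemma norm_apply_zero_le (hσ : 1 / 2 < σ) (hv : Continuous v) (hfin : gagliardoSqE σ v < ∞) :
    ‖v 0‖ ≤ √(∫ x in I01, ‖v x‖ ^ 2) +
      √(2 * (gagliardoSqE σ v).toReal) / (1 - (1 / 2) ^ (σ - 1 / 2)) := by
  -- As `σ > 1/2`, the averages of `v` over `[0, 2⁻ᵏ]` converge to `v 0` at a geometric rate.
  set A : ℕ → E := fun k => ∫ t in I01, v ((1 / 2) ^ k * t)
  have hratio : (1 / 2 : ℝ) ^ (σ - 1 / 2) < 1 :=
    rpow_lt_one (by norm_num) (by norm_num) (by linarith)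
  have hlim : Tendsto A atTop (𝓝 (v 0)) := by
    have hcont : Continuous fun b : ℝ => ∫ t in I01, v (b * t) :=
      continuous_integral_I01 (by fun_prop)
    have hpow := tendsto_pow_atTop_nhds_zero_of_lt_one (r := (1 / 2 : ℝ)) (by norm_num)
      (by norm_num)
    simpa [A, Function.comp_def] using (hcont.tendsto 0).comp hpow
  have hdist : dist (A 0) (v 0) ≤ _ := dist_le_of_le_geometric_of_tendsto₀ _ _ hratio
    (fun k => dist_integral_dyadic_dilation_le (by linarith) hv hfin k) hlim
  have hmean : ‖A 0‖ ≤ √(∫ x in I01, ‖v x‖ ^ 2) := by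
    simpa [A] using le_sqrt_of_sq_le (sq_norm_integral_le (integrableOn_I01_of_continuous hv)
      (integrableOn_I01_of_continuous (by fun_prop)))
  rw [dist_comm, dist_eq_norm] at hdist
  linarith [norm_le_norm_add_norm_sub' (v 0) (A 0)]

lemma exists_norm_le_sqrt_add_gagliardoSqE (E : Type*) [NormedAddCommGroup E] [NormedSpace ℝ E]
    [CompleteSpace E] (hσ : 1 / 2 < σ) :
    ∃ C > 0, ∀ v : ℝ → E, Function.Periodic v 1 → Continuous v → gagliardoSqE σ v < ∞ →
      ∀ x, ‖v x‖ ≤ C * √((∫ y in I01, ‖v y‖ ^ 2) + (gagliardoSqE σ v).toReal) := by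
  set ρ : ℝ := (1 / 2) ^ (σ - 1 / 2)
  have hρ : 0 < 1 - ρ := sub_pos.2 (rpow_lt_one (by norm_num) (by norm_num) (by linarith))
  refine ⟨1 + √2 / (1 - ρ), by positivity, fun v hper hv hfin x => ?_⟩
  set L := ∫ y in I01, ‖v y‖ ^ 2
  set D := (gagliardoSqE σ v).toReal
  have hL : 0 ≤ L := integral_nonneg fun y => by positivity
  have hD : 0 ≤ D := ENNReal.toReal_nonneg
  have htranslate : ‖v x‖ ≤ √L + √(2 * D) / (1 - ρ) := by
    have h0 := norm_apply_zero_le (v := fun y => v (x + y)) hσ (by fun_prop)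
      ((gagliardoSqE_comp_add_left hper x).trans_lt hfin)
    rw [gagliardoSqE_comp_add_left hper x, integral_I01_add_eq_of_periodic
      (f := fun y => ‖v y‖ ^ 2) (fun y => by simp only [hper y]), add_zero] at h0
    exact h0
  calc ‖v x‖ ≤ √L + √2 * √D / (1 - ρ) := by rwa [← sqrt_mul zero_le_two]
    _ ≤ √(L + D) + √2 * √(L + D) / (1 - ρ) := by
      gcongr <;> linarith
    _ = (1 + √2 / (1 - ρ)) * √(L + D) := by ring

end SobolevEmbedding

section Hardy

lemma lintegral_average_div_rpow_le {φ : ℝ → ℝ} (hφ : Continuous φ) (hφ0 : 0 ≤ φ) {p : ℝ}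
    (hp : 1 ≤ p) {W : Set ℝ} (hW : MeasurableSet W) (hstar : StarConvex ℝ 0 W) :
    ∫⁻ h in W, ENNReal.ofReal ((∫ t in I01, φ (t * h)) / |h| ^ p) ≤
      ∫⁻ h in W, ENNReal.ofReal (φ h / |h| ^ p) := by
  have hunfold (h : ℝ) : ENNReal.ofReal ((∫ t in I01, φ (t * h)) / |h| ^ p) =
      ∫⁻ t in I01, ENNReal.ofReal (φ (t * h) / |h| ^ p) := by
    rw [← integral_div]
    exact ofReal_integral_eq_lintegral_ofReal (integrableOn_I01_of_continuous (by fun_prop))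
      (ae_of_all _ fun t => div_nonneg (hφ0 _) (by positivity))
  have hmeas : Measurable (Function.uncurry fun h t : ℝ =>
      ENNReal.ofReal (φ (t * h) / |h| ^ p)) := by
    have hnum : Measurable fun z : ℝ × ℝ => φ (z.2 * z.1) := by fun_prop
    have hden : Measurable fun z : ℝ × ℝ => |z.1| := by fun_prop
    exact (hnum.div (hden.pow_const p)).ennreal_ofReal
  have hdilate {t : ℝ} (ht : 0 < t) (ht1 : t ≤ 1) :
      ∫⁻ h in W, ENNReal.ofReal (φ (t * h) / |h| ^ p) ≤
        ∫⁻ h in W, ENNReal.ofReal (φ h / |h| ^ p) := by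
    have hscale (h : ℝ) : ENNReal.ofReal (φ (t * h) / |h| ^ p) =
        ENNReal.ofReal (t ^ p) * ENNReal.ofReal (φ (t * h) / |t * h| ^ p) := by
      rw [← ENNReal.ofReal_mul (by positivity), abs_mul, abs_of_pos ht,
        mul_rpow ht.le (abs_nonneg h), ← mul_div_assoc, mul_div_mul_left _ _ (by positivity)]
    simp only [hscale]
    rw [lintegral_const_mul' _ _ ENNReal.ofReal_ne_top]
    calc _ ≤ ENNReal.ofReal t * ∫⁻ h in W, ENNReal.ofReal (φ (t * h) / |t * h| ^ p) := by
          gcongr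
          exact rpow_le_self_of_le_one ht.le ht1 hp
      _ ≤ _ := ofReal_mul_setLIntegral_comp_mul_left_le ht hW
          (fun h hh => by simpa using hstar hh (sub_nonneg.2 ht1) ht.le (by ring))
          fun h => ENNReal.ofReal (φ h / |h| ^ p)
  simp only [hunfold]
  rw [lintegral_lintegral_swap hmeas.aemeasurable, I01, restrict_Ico_eq_restrict_Ioc]
  refine (setLIntegral_mono' measurableSet_Ioc fun t ht => hdilate ht.1 ht.2).trans ?_
  simp

end Hardy

section PeriodicCurves

variable {E : Type*} [NormedAddCommGroup E] [NormedSpace ℝ E]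

lemma periodic_deriv {u : ℝ → E} {a : ℝ} (hu : Function.Periodic u a) :
    Function.Periodic (deriv u) a := fun x => by
  rw [← deriv_comp_add_const, funext hu]

lemma norm_sub_le_mul_dT {u : ℝ → E} (hper : Function.Periodic u 1) (hdiff : Differentiable ℝ u)
    {W : ℝ} (hW : ∀ x, ‖deriv u x‖ ≤ W) (x y : ℝ) : ‖u y - u x‖ ≤ W * dT x y := by
  obtain ⟨h, -, hdist, hy⟩ := exists_abs_eq_dT_of_periodic hper x y
  have hmv := convex_univ.norm_image_sub_le_of_norm_deriv_le (fun z _ => hdiff z)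
    (fun z _ => hW z) (mem_univ x) (mem_univ (x + h))
  rwa [hy, add_sub_cancel_left, Real.norm_eq_abs, hdist] at hmv

lemma sub_eq_smul_integral_deriv [CompleteSpace E] {u : ℝ → E} (hu : ContDiff ℝ 1 u) (x h : ℝ) :
    u (x + h) - u x = h • ∫ t in I01, deriv u (x + t * h) := by
  have : Continuous (deriv u) := hu.continuous_deriv le_rfl
  have hftc := intervalIntegral.integral_unitInterval_deriv_eq_sub (𝕜 := ℝ) (f := u)
    (f' := deriv u) (z₀ := x) (z₁ := h) (by fun_prop)
    fun t _ => (hu.differentiable one_ne_zero _).hasDerivAt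
  rw [integral_I01_eq_intervalIntegral, ← hftc]
  rfl

lemma dT_eq_zero_of_injOn {α : Type*} {f : ℝ → α} (hper : Function.Periodic f 1)
    (hinj : InjOn f I01) {x y : ℝ} (hxy : f x = f y) : dT x y = 0 := by
  have hfract (z : ℝ) : f (Int.fract z) = f z := by
    simpa using hper.sub_int_mul_eq (x := z) ⌊z⌋
  have heq : Int.fract y = Int.fract x :=
    hinj ⟨Int.fract_nonneg y, Int.fract_lt_one y⟩ ⟨Int.fract_nonneg x, Int.fract_lt_one x⟩
      (by rw [hfract, hfract, hxy])
  obtain ⟨k, hk⟩ := Int.fract_eq_fract.1 heq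
  rw [dT_eq_norm, hk, norm_eq_zero]
  exact AddCircle.coe_eq_zero_iff 1 |>.2 ⟨k, by simp⟩

end PeriodicCurves

section UniformlyEmbedded

variable {E : Type*} [NormedAddCommGroup E] [NormedSpace ℝ E] {c M : ℝ} {η : ℝ → E}

/-- Closed `C¹` curves embedded with quantitative constants: the chord-arc bound
`c · d_𝕋(x, y) ≤ |η(y) - η(x)|`, which also bounds the speed from below, and the speed bound
`|η'| ≤ M`. On the class of all such curves with fixed `c` and `M` the metric `G` is controlled
uniformly by the `H^s` norm. -/
structure UniformlyEmbedded (c M : ℝ) (η : ℝ → E) : Prop where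
  pos : 0 < c
  periodic : Function.Periodic η 1
  contDiff : ContDiff ℝ 1 η
  mul_dT_le : ∀ x y, c * dT x y ≤ ‖η y - η x‖
  norm_deriv_le : ∀ x, ‖deriv η x‖ ≤ M

namespace UniformlyEmbedded

lemma differentiable (hη : UniformlyEmbedded c M η) : Differentiable ℝ η :=
  hη.contDiff.differentiable one_ne_zero

lemma continuous_deriv (hη : UniformlyEmbedded c M η) : Continuous (deriv η) :=
  hη.contDiff.continuous_deriv le_rfl

lemma mul_abs_le (hη : UniformlyEmbedded c M η) (x : ℝ) {h : ℝ} (hh : |h| ≤ 1 / 2) :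
    c * |h| ≤ ‖η (x + h) - η x‖ := by
  simpa only [dT_add_right_of_abs_le hh] using hη.mul_dT_le x (x + h)

lemma le_norm_deriv (hη : UniformlyEmbedded c M η) (x : ℝ) : c ≤ ‖deriv η x‖ := by
  have hslope := (hasDerivAt_iff_tendsto_slope_zero.1 (hη.differentiable x).hasDerivAt).norm
  refine ge_of_tendsto hslope ?_
  have hsmall : ∀ᶠ h : ℝ in 𝓝[≠] 0, |h| ≤ 1 / 2 := by
    refine eventually_nhdsWithin_of_eventually_nhds ?_
    exact (continuous_abs.tendsto' (0 : ℝ) 0 abs_zero).eventually_le_const (by norm_num)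
  filter_upwards [hsmall, self_mem_nhdsWithin] with h hh hne
  rw [norm_smul, norm_inv, Real.norm_eq_abs, ← div_eq_inv_mul, le_div_iff₀ (abs_pos.2 hne)]
  exact hη.mul_abs_le x hh

lemma deriv_ne_zero (hη : UniformlyEmbedded c M η) (x : ℝ) : deriv η x ≠ 0 :=
  norm_pos_iff.1 (hη.pos.trans_le (hη.le_norm_deriv x))

lemma bound_pos (hη : UniformlyEmbedded c M η) : 0 < M :=
  hη.pos.trans_le ((hη.le_norm_deriv 0).trans (hη.norm_deriv_le 0))

lemma perturb {γ : ℝ → E} (hγ : UniformlyEmbedded c M γ) (hper : Function.Periodic η 1)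
    (hη : ContDiff ℝ 1 η) (hclose : ∀ x, ‖deriv (η - γ) x‖ ≤ c / 2) :
    UniformlyEmbedded (c / 2) (M + c / 2) η where
  pos := half_pos hγ.pos
  periodic := hper
  contDiff := hη
  mul_dT_le x y := by
    have hdiff := norm_sub_le_mul_dT (hper.sub hγ.periodic)
      ((hη.sub hγ.contDiff).differentiable one_ne_zero) hclose x y
    have hsplit : γ y - γ x = (η y - η x) - ((η - γ) y - (η - γ) x) := by
      simp only [Pi.sub_apply]
      abel
    have htri := norm_sub_le (η y - η x) ((η - γ) y - (η - γ) x)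
    rw [← hsplit] at htri
    linarith [hγ.mul_dT_le x y]
  norm_deriv_le x := by
    have hsplit : deriv η x = deriv γ x + deriv (η - γ) x := by
      rw [deriv_sub (hη.differentiable one_ne_zero x) (hγ.differentiable x)]
      abel
    rw [hsplit]
    exact (norm_add_le _ _).trans (add_le_add (hγ.norm_deriv_le x) (hclose x))

lemma inM {n : ℕ} {s : ℝ} {η : ℝ → En n} (hη : UniformlyEmbedded c M η) (hHs : InHs s η) :
    InM s η := by
  refine ⟨hHs, fun x hx y hy hxy => eq_of_dT_eq_zero hx hy ?_, hη.deriv_ne_zero⟩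
  have hle := hη.mul_dT_le x y
  rw [hxy, sub_self, norm_zero] at hle
  exact le_antisymm (nonpos_of_mul_nonpos_right hle hη.pos) (dT_nonneg x y)

end UniformlyEmbedded

lemma integral_deriv_ne_zero_of_injOn [CompleteSpace E] (hper : Function.Periodic η 1)
    (hη : ContDiff ℝ 1 η) (hinj : InjOn η I01) (himm : ∀ x, deriv η x ≠ 0) (x : ℝ) {h : ℝ}
    (hh : |h| ≤ 1 / 2) : ∫ t in I01, deriv η (x + t * h) ≠ 0 := by
  intro hzero
  have hclosed : η x = η (x + h) := by
    rw [eq_comm, ← sub_eq_zero, sub_eq_smul_integral_deriv hη, hzero, smul_zero]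
  have hh0 : h = 0 := by
    rw [← abs_eq_zero, ← dT_add_right_of_abs_le hh x]
    exact dT_eq_zero_of_injOn hper hinj hclosed
  refine himm x ?_
  simpa [hh0] using hzero

lemma exists_uniformlyEmbedded_of_injOn [CompleteSpace E] (hper : Function.Periodic η 1)
    (hη : ContDiff ℝ 1 η) (hinj : InjOn η I01) (himm : ∀ x, deriv η x ≠ 0) :
    ∃ c M, UniformlyEmbedded c M η := by
  have hcont : Continuous (deriv η) := hη.continuous_deriv le_rfl
  have hper' := periodic_deriv hper
  -- `g (x, h)` is the difference quotient of `η` from `x` to `x + h`, extended to `h = 0` by `η'`;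
  -- it never vanishes for `|h| ≤ 1/2`, so compactness bounds it away from `0`.
  set g : ℝ × ℝ → E := fun z => ∫ t in I01, deriv η (z.1 + t * z.2)
  have hg : Continuous g := continuous_integral_I01 (by fun_prop)
  obtain ⟨z₀, hz₀, hmin⟩ := (isCompact_Icc.prod isCompact_Icc).exists_isMinOn
    (s := Icc (0 : ℝ) 1 ×ˢ Icc (-(1 / 2) : ℝ) (1 / 2)) ⟨(0, 0), by norm_num⟩ hg.norm.continuousOn
  obtain ⟨M, hM⟩ := (hper'.compact_of_continuous one_ne_zero hcont).isBounded.exists_norm_le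
  refine ⟨‖g z₀‖, M, norm_pos_iff.2 (integral_deriv_ne_zero_of_injOn hper hη hinj himm _
    (abs_le.2 hz₀.2)), hper, hη, fun x y => ?_, fun x => hM _ (mem_range_self x)⟩
  obtain ⟨h, hh, hdist, hy⟩ := exists_abs_eq_dT_of_periodic hper x y
  have hfract : g (Int.fract x, h) = g (x, h) := by
    simp only [g, Int.fract]
    refine integral_congr_ae (ae_of_all _ fun t => ?_)
    simpa only [mul_one, sub_add_eq_add_sub] using hper'.sub_int_mul_eq (x := x + t * h) ⌊x⌋
  have hle : ‖g z₀‖ ≤ ‖g (x, h)‖ := hfract ▸ hmin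
    ⟨⟨Int.fract_nonneg x, (Int.fract_lt_one x).le⟩, abs_le.1 hh⟩
  rw [← hy, sub_eq_smul_integral_deriv hη, norm_smul, Real.norm_eq_abs, hdist, mul_comm]
  exact mul_le_mul_of_nonneg_left hle (dT_nonneg x y)

end UniformlyEmbedded

section TangentPointKernel

/-- The mean square oscillation `∫₀¹ |u'(x + th) - u'(x)|² dt` of `u'` between `x` and `x + h`,
which dominates the first-order Taylor remainder of `u`. -/
def meanSqDerivOsc {E : Type*} [NormedAddCommGroup E] [NormedSpace ℝ E] (u : ℝ → E)
    (x h : ℝ) : ℝ :=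
  ∫ t in I01, ‖deriv u (x + t * h) - deriv u x‖ ^ 2

section Taylor

variable {E : Type*} [NormedAddCommGroup E] [NormedSpace ℝ E] {u : ℝ → E}

lemma meanSqDerivOsc_nonneg (u : ℝ → E) (x h : ℝ) : 0 ≤ meanSqDerivOsc u x h :=
  integral_nonneg fun _ => by positivity

lemma measurable_meanSqDerivOsc_kernel (hu : ContDiff ℝ 1 u) (p : ℝ) :
    Measurable (Function.uncurry fun x h : ℝ =>
      ENNReal.ofReal (meanSqDerivOsc u x h / |h| ^ p)) := by
  have : Continuous (deriv u) := hu.continuous_deriv le_rfl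
  have hnum : Measurable fun z : ℝ × ℝ => meanSqDerivOsc u z.1 z.2 :=
    (continuous_integral_I01 (by fun_prop)).measurable
  have hden : Measurable fun z : ℝ × ℝ => |z.2| := by fun_prop
  exact (hnum.div (hden.pow_const p)).ennreal_ofReal

lemma lintegral_meanSqDerivOsc_le {σ : ℝ} (hσ : 0 ≤ σ) (hper : Function.Periodic u 1)
    (hu : ContDiff ℝ 1 u) :
    ∫⁻ x in I01, ∫⁻ h in Ico (-1 / 2 : ℝ) (1 / 2),
      ENNReal.ofReal (meanSqDerivOsc u x h / |h| ^ (2 * σ + 1)) ≤ gagliardoSqE σ (deriv u) := by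
  have : Continuous (deriv u) := hu.continuous_deriv le_rfl
  rw [gagliardoSqE_eq_lintegral_window (periodic_deriv hper)]
  refine lintegral_mono fun x => ?_
  exact lintegral_average_div_rpow_le (φ := fun h => ‖deriv u (x + h) - deriv u x‖ ^ 2)
    (by fun_prop) (fun h => by positivity) (by linarith) measurableSet_Ico
    ((convex_Ico _ _).starConvex (by norm_num))

variable [CompleteSpace E]

lemma sq_norm_taylor_remainder_le (hu : ContDiff ℝ 1 u) (x h : ℝ) :
    ‖u (x + h) - u x - h • deriv u x‖ ^ 2 ≤ h ^ 2 * meanSqDerivOsc u x h := by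
  have : Continuous (deriv u) := hu.continuous_deriv le_rfl
  have hremainder : u (x + h) - u x - h • deriv u x =
      h • ∫ t in I01, (deriv u (x + t * h) - deriv u x) := by
    rw [integral_sub (integrableOn_I01_of_continuous (by fun_prop)) (integrable_const _),
      smul_sub, ← sub_eq_smul_integral_deriv hu]
    simp
  rw [hremainder, norm_smul, mul_pow, Real.norm_eq_abs, sq_abs]
  gcongr
  exact sq_norm_integral_le (integrableOn_I01_of_continuous (by fun_prop))
    (integrableOn_I01_of_continuous (by fun_prop))

end Taylor

variable {n : ℕ} {s c M W : ℝ} {η w : ℝ → En n}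

lemma DDg_sub (η w : ℝ → En n) (x : ℝ) (z₁ z₂ : En n) :
    DDg η w x (z₁ - z₂) = DDg η w x z₁ - DDg η w x z₂ := by
  simp only [DDg, inner_sub_right, mul_sub, sub_smul]

lemma DDg_smul_deriv {x : ℝ} (hx : deriv η x ≠ 0) (w : ℝ → En n) (h : ℝ) :
    DDg η w x (h • deriv η x) = h • deriv w x := by
  have hnorm : ‖deriv η x‖ ≠ 0 := norm_ne_zero_iff.2 hx
  rw [DDg, inner_smul_right, real_inner_self_eq_norm_sq]
  field_simp

lemma norm_DDg_le (η w : ℝ → En n) (x : ℝ) (z : En n) :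
    ‖DDg η w x z‖ ≤ ‖deriv w x‖ / ‖deriv η x‖ * ‖z‖ := by
  rw [DDg, norm_smul, norm_mul, norm_inv, norm_pow, norm_norm]
  calc (‖deriv η x‖ ^ 2)⁻¹ * ‖⟪deriv η x, z⟫‖ * ‖deriv w x‖
      ≤ (‖deriv η x‖ ^ 2)⁻¹ * (‖deriv η x‖ * ‖z‖) * ‖deriv w x‖ := by
        gcongr
        exact norm_inner_le_norm _ _
    _ = ‖deriv w x‖ / ‖deriv η x‖ * ‖z‖ := by
        rcases eq_or_ne ‖deriv η x‖ 0 with h0 | h0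
        · simp [h0]
        · field_simp

lemma sq_norm_Rop_mul_muW_eq (hs : 2 * s + 1 ≠ 0) (η w : ℝ → En n) (x y : ℝ) :
    ‖Rop s η w x y‖ ^ 2 * muW η x y =
      ‖w y - w x - DDg η w x (η y - η x)‖ ^ 2 * (‖deriv η x‖ * ‖deriv η y‖) /
        ‖η y - η x‖ ^ (2 * s + 1) := by
  rw [Rop, muW, norm_smul]
  rcases (norm_nonneg (η y - η x)).eq_or_lt with h0 | hpos
  · rw [← h0, zero_rpow hs, div_zero, div_zero, mul_zero]
  · have hpow : ‖η y - η x‖ ^ (2 * s + 1) = (‖η y - η x‖ ^ s) ^ 2 * ‖η y - η x‖ := by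
      rw [rpow_add_one hpos.ne', mul_comm 2 s, ← rpow_mul_natCast hpos.le, Nat.cast_ofNat]
    rw [hpow, norm_inv, Real.norm_of_nonneg (by positivity)]
    field_simp

namespace UniformlyEmbedded

lemma sq_norm_sub_sub_DDg_le (hη : UniformlyEmbedded c M η) (hw : ContDiff ℝ 1 w)
    (hW : ∀ x, ‖deriv w x‖ ≤ W) (x h : ℝ) :
    ‖w (x + h) - w x - DDg η w x (η (x + h) - η x)‖ ^ 2 ≤
      2 * h ^ 2 * (meanSqDerivOsc w x h + (W / c) ^ 2 * meanSqDerivOsc η x h) := by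
  have hW0 : 0 ≤ W := (norm_nonneg _).trans (hW x)
  have hsplit : w (x + h) - w x - DDg η w x (η (x + h) - η x) =
      (w (x + h) - w x - h • deriv w x) - DDg η w x (η (x + h) - η x - h • deriv η x) := by
    rw [DDg_sub _ _ _ (η (x + h) - η x), DDg_smul_deriv (hη.deriv_ne_zero x)]
    abel
  have hDDg : ‖DDg η w x (η (x + h) - η x - h • deriv η x)‖ ≤
      W / c * ‖η (x + h) - η x - h • deriv η x‖ := by
    refine (norm_DDg_le _ _ _ _).trans ?_
    gcongr
    exacts [hη.pos, hW x, hη.le_norm_deriv x]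
  calc _ ≤ (‖w (x + h) - w x - h • deriv w x‖ +
          W / c * ‖η (x + h) - η x - h • deriv η x‖) ^ 2 := by
        rw [hsplit]
        gcongr
        exact (norm_sub_le _ _).trans (by gcongr)
    _ ≤ 2 * (‖w (x + h) - w x - h • deriv w x‖ ^ 2 +
          (W / c) ^ 2 * ‖η (x + h) - η x - h • deriv η x‖ ^ 2) := by
        rw [← mul_pow]
        exact add_sq_le
    _ ≤ 2 * (h ^ 2 * meanSqDerivOsc w x h + (W / c) ^ 2 * (h ^ 2 * meanSqDerivOsc η x h)) := by
        gcongr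
        exacts [sq_norm_taylor_remainder_le hw x h, sq_norm_taylor_remainder_le hη.contDiff x h]
    _ = _ := by ring

lemma sq_norm_Rop_mul_muW_le (hη : UniformlyEmbedded c M η) (hs : 0 < s) (hw : ContDiff ℝ 1 w)
    (hW : ∀ x, ‖deriv w x‖ ≤ W) (x : ℝ) {h : ℝ} (hh : |h| ≤ 1 / 2) :
    ‖Rop s η w x (x + h)‖ ^ 2 * muW η x (x + h) ≤
      2 * M ^ 2 / c ^ (2 * s + 1) * (meanSqDerivOsc w x h / |h| ^ (2 * (s - 1) + 1)) +
        2 * M ^ 2 / c ^ (2 * s + 1) * (W / c) ^ 2 *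
          (meanSqDerivOsc η x h / |h| ^ (2 * (s - 1) + 1)) := by
  have hc := hη.pos
  have hM := hη.bound_pos
  have hOw := meanSqDerivOsc_nonneg w x h
  have hOη := meanSqDerivOsc_nonneg η x h
  rw [sq_norm_Rop_mul_muW_eq (by positivity)]
  rcases eq_or_ne h 0 with rfl | h0
  · rw [add_zero, sub_self (η x), norm_zero, zero_rpow (by positivity), div_zero]
    positivity
  have hpow : |h| ^ (2 * s + 1) = |h| ^ (2 * (s - 1) + 1) * h ^ 2 := by
    rw [← sq_abs h, ← rpow_add_natCast (abs_ne_zero.2 h0)]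
    congr 1
    push_cast
    ring
  have : 0 < |h| := abs_pos.2 h0
  calc _ ≤ 2 * h ^ 2 * (meanSqDerivOsc w x h + (W / c) ^ 2 * meanSqDerivOsc η x h) * (M * M) /
          (c * |h|) ^ (2 * s + 1) := by
        gcongr
        exacts [hη.sq_norm_sub_sub_DDg_le hw hW x h, hη.norm_deriv_le x,
          hη.norm_deriv_le (x + h), hη.mul_abs_le x hh]
    _ = _ := by
        rw [mul_rpow hc.le (abs_nonneg h), hpow]
        field_simp

end UniformlyEmbedded

/-- `‖R^s_γ u‖²_{L²(μ_γ)}`, valued in `[0,∞]`; for `u = γ` this is the tangent-point energy. -/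
def RmuSqE (s : ℝ) (γ u : ℝ → En n) : ℝ≥0∞ :=
  ∫⁻ x in I01, ∫⁻ y in I01, ENNReal.ofReal (‖Rop s γ u x y‖ ^ 2 * muW γ x y)

lemma UniformlyEmbedded.RmuSqE_le (hη : UniformlyEmbedded c M η) (hs : 1 ≤ s)
    (hper : Function.Periodic w 1) (hw : ContDiff ℝ 1 w) (hW : ∀ x, ‖deriv w x‖ ≤ W) :
    RmuSqE s η w ≤
      ENNReal.ofReal (2 * M ^ 2 / c ^ (2 * s + 1)) * gagliardoSqE (s - 1) (deriv w) +
        ENNReal.ofReal (2 * M ^ 2 / c ^ (2 * s + 1) * (W / c) ^ 2) *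
          gagliardoSqE (s - 1) (deriv η) := by
  have hc := hη.pos
  have hkernel (x : ℝ) : Function.Periodic
      (fun y => ENNReal.ofReal (‖Rop s η w x y‖ ^ 2 * muW η x y)) 1 := fun y => by
    simp only [Rop, muW, hη.periodic y, hper y, periodic_deriv hη.periodic y]
  refine le_trans ?_ (add_le_add
    (mul_le_mul_right (lintegral_meanSqDerivOsc_le (sub_nonneg.2 hs) hper hw) _)
    (mul_le_mul_right (lintegral_meanSqDerivOsc_le (sub_nonneg.2 hs) hη.periodic hη.contDiff) _))
  rw [← lintegral_lintegral_const_mul_add_const_mul (measurable_meanSqDerivOsc_kernel hw _) _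
    ENNReal.ofReal_ne_top ENNReal.ofReal_ne_top]
  refine lintegral_mono fun x => ?_
  rw [← lintegral_Ico_add_eq_of_periodic (hkernel x) (-1 / 2) x,
    show (-1 / 2 : ℝ) + 1 = 1 / 2 by norm_num]
  refine setLIntegral_mono' measurableSet_Ico fun h hh => ?_
  have hOw := meanSqDerivOsc_nonneg w x h
  have hOη := meanSqDerivOsc_nonneg η x h
  rw [← ENNReal.ofReal_mul (by positivity), ← ENNReal.ofReal_mul (by positivity),
    ← ENNReal.ofReal_add (by positivity) (by positivity)]
  exact ENNReal.ofReal_le_ofReal (hη.sq_norm_Rop_mul_muW_le (by linarith) hw hW x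
    (abs_le.2 ⟨by linarith [hh.1], hh.2.le⟩))

end TangentPointKernel

section SobolevSpace

variable {n : ℕ} {s : ℝ} {u v γ : ℝ → En n}

namespace InHs

lemma differentiable (hu : InHs s u) : Differentiable ℝ u :=
  hu.2.1.differentiable one_ne_zero

lemma continuous_deriv (hu : InHs s u) : Continuous (deriv u) :=
  hu.2.1.continuous_deriv le_rfl

lemma deriv_add (hu : InHs s u) (hv : InHs s v) : deriv (u + v) = deriv u + deriv v :=
  funext fun x => _root_.deriv_add (hu.differentiable x) (hv.differentiable x)

lemma deriv_const_smul (hu : InHs s u) (a : ℝ) : deriv (a • u) = a • deriv u :=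
  funext fun x => _root_.deriv_const_smul a (hu.differentiable x)

end InHs

/-- The Sobolev–Slobodeckij space `H^s(𝕋, ℝⁿ)` as a space of functions. -/
def HsSpace (s : ℝ) (n : ℕ) : Submodule ℝ (ℝ → En n) where
  carrier := {u | InHs s u}
  zero_mem' := ⟨fun _ => rfl, contDiff_const, by simp [gagliardoSqE]⟩
  add_mem' {u v} hu hv := by
    refine ⟨hu.1.add hv.1, hu.2.1.add hv.2.1, ?_⟩
    rw [hu.deriv_add hv]
    exact gagliardoSqE_add_lt_top hu.continuous_deriv hu.2.2 hv.2.2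
  smul_mem' a u hu := by
    refine ⟨fun x => congrArg (a • ·) (hu.1 x), hu.2.1.const_smul a, ?_⟩
    rw [hu.deriv_const_smul, gagliardoSqE_const_smul]
    exact ENNReal.mul_lt_top ENNReal.ofReal_lt_top hu.2.2

lemma InHs.const_smul (hu : InHs s u) (a : ℝ) : InHs s (a • u) :=
  (HsSpace s n).smul_mem a hu

lemma InHs.sub (hu : InHs s u) (hv : InHs s v) : InHs s (u - v) :=
  (HsSpace s n).sub_mem hu hv

lemma HsNormSq_nonneg (s : ℝ) (u : ℝ → En n) : 0 ≤ HsNormSq s u := by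
  unfold HsNormSq
  positivity

lemma sq_HsNorm (s : ℝ) (u : ℝ → En n) : HsNorm s u ^ 2 = HsNormSq s u :=
  sq_sqrt (HsNormSq_nonneg s u)

lemma HsNormSq_const_smul (hu : InHs s u) (a : ℝ) : HsNormSq s (a • u) = a ^ 2 * HsNormSq s u := by
  simp only [HsNormSq, hu.deriv_const_smul, gagliardoSqE_const_smul, Pi.smul_apply, norm_smul,
    mul_pow, norm_eq_abs, sq_abs, integral_const_mul, ENNReal.toReal_mul,
    ENNReal.toReal_ofReal (sq_nonneg a)]
  ring

lemma HsNorm_sub_comm (hu : InHs s u) (hv : InHs s v) : HsNorm s (u - v) = HsNorm s (v - u) := by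
  rw [HsNorm, HsNorm, ← neg_sub, ← neg_one_smul ℝ, HsNormSq_const_smul (hv.sub hu)]
  norm_num

lemma HsNorm_zero (s : ℝ) : HsNorm s (0 : ℝ → En n) = 0 := by
  rw [HsNorm, ← zero_smul ℝ (0 : ℝ → En n), HsNormSq_const_smul (HsSpace s n).zero_mem]
  norm_num

lemma integral_sq_norm_le_HsNormSq (s : ℝ) (u : ℝ → En n) :
    ∫ x in I01, ‖u x‖ ^ 2 ≤ HsNormSq s u := by
  rw [HsNormSq, add_assoc]
  exact le_add_of_nonneg_right (by positivity)

lemma integral_sq_norm_deriv_add_gagliardo_le_HsNormSq (s : ℝ) (u : ℝ → En n) :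
    (∫ x in I01, ‖deriv u x‖ ^ 2) + (gagliardoSqE (s - 1) (deriv u)).toReal ≤ HsNormSq s u := by
  rw [HsNormSq, add_assoc]
  exact le_add_of_nonneg_left (by positivity)

lemma gagliardo_le_HsNormSq (s : ℝ) (u : ℝ → En n) :
    (gagliardoSqE (s - 1) (deriv u)).toReal ≤ HsNormSq s u :=
  le_add_of_nonneg_left (by positivity)

lemma exists_norm_deriv_le_mul_HsNorm (hs : 3 / 2 < s) (n : ℕ) :
    ∃ C > 0, ∀ u : ℝ → En n, InHs s u → ∀ x, ‖deriv u x‖ ≤ C * HsNorm s u := by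
  obtain ⟨C, hC, hsobolev⟩ :=
    exists_norm_le_sqrt_add_gagliardoSqE (En n) (show 1 / 2 < s - 1 by linarith)
  refine ⟨C, hC, fun u hu x =>
    (hsobolev _ (periodic_deriv hu.1) hu.continuous_deriv hu.2.2 x).trans ?_⟩
  rw [HsNorm]
  gcongr
  exact integral_sq_norm_deriv_add_gagliardo_le_HsNormSq s u

lemma integral_sq_norm_convex_combination_le {E : Type*} [NormedAddCommGroup E] [NormedSpace ℝ E]
    {f g : ℝ → E} (hf : Continuous f) (hg : Continuous g) {a b : ℝ} (ha : 0 ≤ a) (hb : 0 ≤ b)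
    (hab : a + b = 1) :
    ∫ x in I01, ‖(a • f + b • g) x‖ ^ 2 ≤
      a * (∫ x in I01, ‖f x‖ ^ 2) + b * ∫ x in I01, ‖g x‖ ^ 2 := by
  have hint {φ : ℝ → ℝ} (hφ : Continuous φ) : IntegrableOn φ I01 :=
    integrableOn_I01_of_continuous hφ
  rw [← integral_const_mul, ← integral_const_mul,
    ← integral_add (hint (by fun_prop)) (hint (by fun_prop))]
  exact integral_mono (hint (by fun_prop)) (hint (by fun_prop)) fun x =>
    convexOn_univ_norm_sq.2 (mem_univ (f x)) (mem_univ (g x)) ha hb hab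

lemma convexOn_HsNormSq (s : ℝ) (n : ℕ) :
    ConvexOn ℝ (HsSpace s n : Set (ℝ → En n)) (HsNormSq s) := by
  refine ⟨(HsSpace s n).convex, fun u (hu : InHs s u) v (hv : InHs s v) a b ha hb hab => ?_⟩
  have hderiv : deriv (a • u + b • v) = a • deriv u + b • deriv v := by
    rw [(hu.const_smul a).deriv_add (hv.const_smul b), hu.deriv_const_smul, hv.deriv_const_smul]
  have hgag : (gagliardoSqE (s - 1) (deriv (a • u + b • v))).toReal ≤
      a * (gagliardoSqE (s - 1) (deriv u)).toReal +
        b * (gagliardoSqE (s - 1) (deriv v)).toReal := by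
    have hu' := hu.2.2.ne
    have hv' := hv.2.2.ne
    rw [hderiv, ← ENNReal.toReal_ofReal_mul _ _ ha, ← ENNReal.toReal_ofReal_mul _ _ hb,
      ← ENNReal.toReal_add (by finiteness) (by finiteness)]
    exact ENNReal.toReal_mono (by finiteness)
      (gagliardoSqE_convex_combination_le hu.continuous_deriv _ ha hb hab)
  have hL2 := integral_sq_norm_convex_combination_le hu.2.1.continuous hv.2.1.continuous ha hb hab
  have hL2' := integral_sq_norm_convex_combination_le hu.continuous_deriv hv.continuous_deriv
    ha hb hab
  rw [← hderiv] at hL2'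
  simp only [HsNormSq, smul_eq_mul]
  linarith

lemma HsNormSq_le_two_mul_add (hu : InHs s u) (hv : InHs s v) :
    HsNormSq s u ≤ 2 * HsNormSq s v + 2 * HsNormSq s (u - v) := by
  have hmid : u = (1 / 2 : ℝ) • (2 : ℝ) • v + (1 / 2 : ℝ) • (2 : ℝ) • (u - v) := by
    simp [smul_smul]
  have hconv := (convexOn_HsNormSq s n).2 (hv.const_smul 2) ((hu.sub hv).const_smul 2)
    (show (0 : ℝ) ≤ 1 / 2 by norm_num) (show (0 : ℝ) ≤ 1 / 2 by norm_num) (by norm_num)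
  rw [← hmid, HsNormSq_const_smul hv, HsNormSq_const_smul (hu.sub hv)] at hconv
  simp only [smul_eq_mul] at hconv
  linarith

/-- The open ball `B_r(γ)` in `H^s(𝕋, ℝⁿ)`. -/
def HsBall (s : ℝ) (γ : ℝ → En n) (r : ℝ) : Set (ℝ → En n) :=
  {η | InHs s η ∧ HsNorm s (fun x => η x - γ x) < r}

lemma convex_HsBall (hγ : InHs s γ) {r : ℝ} (hr : 0 < r) : Convex ℝ (HsBall s γ r) := by
  have hball : HsBall s γ r =
      (fun η => -γ + η) ⁻¹' {u | u ∈ HsSpace s n ∧ HsNormSq s u < r ^ 2} := by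
    ext η
    simp only [mem_preimage, mem_ofPred_eq, neg_add_eq_sub, ← sqrt_lt' hr]
    exact and_congr_left' ((HsSpace s n).sub_mem_iff_left hγ).symm
  rw [hball]
  exact ((convexOn_HsNormSq s n).convex_lt _).translate_preimage_right _

end SobolevSpace

section MetricBound

lemma integral_integral_le_of_abs_le_mul {α β : Type*} [MeasurableSpace α] [MeasurableSpace β]
    {μ : Measure α} {ν : Measure β} {f φ : α → β → ℝ} {k : ℝ} (hk : 0 ≤ k)
    (hf : ∀ x y, |f x y| ≤ k * φ x y)
    (hφ : ∫⁻ x, ∫⁻ y, ENNReal.ofReal (φ x y) ∂ν ∂μ < ∞) :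
    ∫ x, ∫ y, f x y ∂ν ∂μ ≤ k * (∫⁻ x, ∫⁻ y, ENNReal.ofReal (φ x y) ∂ν ∂μ).toReal := by
  have hle : ENNReal.ofReal |∫ x, ∫ y, f x y ∂ν ∂μ| ≤
      ENNReal.ofReal k * ∫⁻ x, ∫⁻ y, ENNReal.ofReal (φ x y) ∂ν ∂μ := by
    calc ENNReal.ofReal |∫ x, ∫ y, f x y ∂ν ∂μ|
        = ‖∫ x, ∫ y, f x y ∂ν ∂μ‖ₑ := (Real.enorm_eq_ofReal_abs _).symm
      _ ≤ ∫⁻ x, ∫⁻ y, ‖f x y‖ₑ ∂ν ∂μ := (enorm_integral_le_lintegral_enorm _).trans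
          (lintegral_mono fun x => enorm_integral_le_lintegral_enorm _)
      _ ≤ ∫⁻ x, ∫⁻ y, ENNReal.ofReal k * ENNReal.ofReal (φ x y) ∂ν ∂μ := by
          refine lintegral_mono fun x => lintegral_mono fun y => ?_
          rw [Real.enorm_eq_ofReal_abs, ← ENNReal.ofReal_mul hk]
          exact ENNReal.ofReal_le_ofReal (hf x y)
      _ = ENNReal.ofReal k * ∫⁻ x, ∫⁻ y, ENNReal.ofReal (φ x y) ∂ν ∂μ := by
          simp only [lintegral_const_mul' _ _ ENNReal.ofReal_ne_top]
  rw [← ENNReal.toReal_ofReal_mul _ _ hk]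
  exact (le_abs_self _).trans ((ENNReal.ofReal_le_iff_le_toReal (by finiteness)).1 hle)

variable {n : ℕ} {s c M W : ℝ} {η w : ℝ → En n}

lemma muW_nonneg (η : ℝ → En n) (x y : ℝ) : 0 ≤ muW η x y := by
  unfold muW
  positivity

lemma B1_self_le_RmuSqE (h : RmuSqE s η w < ∞) : B1 s η w w ≤ (RmuSqE s η w).toReal := by
  rw [← one_mul (RmuSqE s η w).toReal]
  refine integral_integral_le_of_abs_le_mul zero_le_one (fun x y => ?_) h
  have hmu := muW_nonneg η x y
  rw [real_inner_self_eq_norm_sq, one_mul, abs_of_nonneg (by positivity)]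

namespace UniformlyEmbedded

lemma inner_Dg_self_le (hη : UniformlyEmbedded c M η) (hW : ∀ x, ‖deriv w x‖ ≤ W) (x : ℝ) :
    ⟪Dg η w x, Dg η w x⟫ ≤ (W / c) ^ 2 := by
  have hW0 : 0 ≤ W := (norm_nonneg _).trans (hW x)
  rw [real_inner_self_eq_norm_sq, Dg, norm_smul, norm_inv, norm_norm, ← div_eq_inv_mul]
  gcongr
  exacts [hη.pos, hW x, hη.le_norm_deriv x]

lemma sq_norm_sub_div_le (hη : UniformlyEmbedded c M η) (hper : Function.Periodic w 1)
    (hw : Differentiable ℝ w) (hW : ∀ x, ‖deriv w x‖ ≤ W) (x y : ℝ) :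
    ‖w y - w x‖ ^ 2 / ‖η y - η x‖ ^ 2 ≤ (W / c) ^ 2 := by
  have hc := hη.pos
  have hW0 : 0 ≤ W := (norm_nonneg _).trans (hW x)
  rw [← div_pow]
  refine pow_le_pow_left₀ (by positivity)
    (div_le_of_le_mul₀ (norm_nonneg _) (by positivity) ?_) 2
  calc ‖w y - w x‖ ≤ W * dT x y := norm_sub_le_mul_dT hper hw hW x y
    _ = W / c * (c * dT x y) := by field_simp
    _ ≤ W / c * ‖η y - η x‖ := by
        gcongr
        exact hη.mul_dT_le x y

lemma B2_self_le (hη : UniformlyEmbedded c M η) (h : RmuSqE s η η < ∞)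
    (hper : Function.Periodic w 1) (hw : Differentiable ℝ w) (hW : ∀ x, ‖deriv w x‖ ≤ W) :
    B2 s η w w ≤ (W / c) ^ 2 * (RmuSqE s η η).toReal := by
  refine integral_integral_le_of_abs_le_mul (sq_nonneg _) (fun x y => ?_) h
  have hmu := muW_nonneg η x y
  rw [real_inner_self_eq_norm_sq, abs_of_nonneg (by positivity), mul_right_comm, mul_comm]
  gcongr
  exact hη.sq_norm_sub_div_le hper hw hW x y

lemma B3_self_le (hη : UniformlyEmbedded c M η) (h : RmuSqE s η η < ∞)
    (hW : ∀ x, ‖deriv w x‖ ≤ W) :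
    B3 s η w w ≤ 2 * (W / c) ^ 2 * (RmuSqE s η η).toReal := by
  refine integral_integral_le_of_abs_le_mul (by positivity) (fun x y => ?_) h
  have hmu := muW_nonneg η x y
  have hnonneg (z : ℝ) : 0 ≤ ⟪Dg η w z, Dg η w z⟫ := real_inner_self_nonneg
  have hsum : 0 ≤ ⟪Dg η w x, Dg η w x⟫ + ⟪Dg η w y, Dg η w y⟫ :=
    add_nonneg (hnonneg x) (hnonneg y)
  rw [abs_of_nonneg (by positivity), mul_right_comm, mul_comm]
  gcongr
  linarith [hη.inner_Dg_self_le hW x, hη.inner_Dg_self_le hW y]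

lemma innerH1g_self_le (hη : UniformlyEmbedded c M η) (hW : ∀ x, ‖deriv w x‖ ≤ W) :
    innerH1g η w w ≤ (W / c) ^ 2 * M := by
  calc innerH1g η w w ≤ ∫ _ in I01, (W / c) ^ 2 * M := by
        refine integral_mono_of_nonneg (ae_of_all _ fun x => ?_) (integrable_const _)
          (ae_of_all _ fun x => ?_)
        · exact mul_nonneg real_inner_self_nonneg (norm_nonneg _)
        · exact mul_le_mul (hη.inner_Dg_self_le hW x) (hη.norm_deriv_le x) (norm_nonneg _)
            (sq_nonneg _)
    _ = (W / c) ^ 2 * M := by simp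

lemma innerL2g_self_le (hη : UniformlyEmbedded c M η) (hw : Continuous w) :
    innerL2g η w w ≤ M * ∫ x in I01, ‖w x‖ ^ 2 := by
  have hη' := hη.continuous_deriv
  rw [innerL2g, ← integral_const_mul]
  refine integral_mono (integrableOn_I01_of_continuous (by fun_prop))
    (integrableOn_I01_of_continuous (by fun_prop)) fun x => ?_
  simp only [real_inner_self_eq_norm_sq]
  rw [mul_comm]
  gcongr
  exact hη.norm_deriv_le x

lemma RmuSqE_lt_top (hη : UniformlyEmbedded c M η) (hs : 1 ≤ s) (hηs : InHs s η)
    (hw : InHs s w) (hW : ∀ x, ‖deriv w x‖ ≤ W) : RmuSqE s η w < ∞ := by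
  have hη' := hηs.2.2
  have hw' := hw.2.2
  exact (hη.RmuSqE_le hs hw.1 hw.2.1 hW).trans_lt (by finiteness)

lemma toReal_RmuSqE_le (hη : UniformlyEmbedded c M η) (hs : 1 ≤ s) (hηs : InHs s η)
    (hw : InHs s w) (hW : ∀ x, ‖deriv w x‖ ≤ W) :
    (RmuSqE s η w).toReal ≤ 2 * M ^ 2 / c ^ (2 * s + 1) *
      ((gagliardoSqE (s - 1) (deriv w)).toReal +
        (W / c) ^ 2 * (gagliardoSqE (s - 1) (deriv η)).toReal) := by
  have hc := hη.pos
  have hη' := hηs.2.2.ne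
  have hw' := hw.2.2.ne
  refine (ENNReal.toReal_mono (by finiteness) (hη.RmuSqE_le hs hw.1 hw.2.1 hW)).trans_eq ?_
  rw [ENNReal.toReal_add (by finiteness) (by finiteness),
    ENNReal.toReal_ofReal_mul _ _ (by positivity), ENNReal.toReal_ofReal_mul _ _ (by positivity)]
  ring

lemma Gmet_self_le (hη : UniformlyEmbedded c M η) (hs : 1 ≤ s) (hηs : InHs s η)
    (hw : InHs s w) (hW : ∀ x, ‖deriv w x‖ ≤ W) :
    Gmet s η w w ≤ 2 * (RmuSqE s η w).toReal +
      (2 * s + 3) * (W / c) ^ 2 * (RmuSqE s η η).toReal + (W / c) ^ 2 * M +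
      M * ∫ x in I01, ‖w x‖ ^ 2 := by
  have hfin := hη.RmuSqE_lt_top hs hηs hηs hη.norm_deriv_le
  have hB1 := B1_self_le_RmuSqE (hη.RmuSqE_lt_top hs hηs hw hW)
  have hB2 := mul_le_mul_of_nonneg_left (hη.B2_self_le hfin hw.1 hw.differentiable hW)
    (show 0 ≤ 2 * s + 1 by linarith)
  have hB3 := hη.B3_self_le hfin hW
  have hH1 := hη.innerH1g_self_le hW
  have hL2 := hη.innerL2g_self_le hw.2.1.continuous
  rw [Gmet]
  linarith

end UniformlyEmbedded

lemma exists_Gmet_self_le (hs : 3 / 2 < s) (n : ℕ) {c M K : ℝ} (hc : 0 < c) (hM : 0 < M)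
    (hK : 0 ≤ K) :
    ∃ C > 0, ∀ η : ℝ → En n, UniformlyEmbedded c M η → InHs s η →
      (gagliardoSqE (s - 1) (deriv η)).toReal ≤ K →
      ∀ w, InHs s w → Gmet s η w w ≤ C * HsNorm s w ^ 2 := by
  obtain ⟨Cs, hCs, hsup⟩ := exists_norm_deriv_le_mul_HsNorm hs n
  set κ := 2 * M ^ 2 / c ^ (2 * s + 1)
  have : 0 < s := by linarith
  refine ⟨2 * (κ * (1 + (Cs / c) ^ 2 * K)) +
    (2 * s + 3) * (Cs / c) ^ 2 * (κ * (K + (M / c) ^ 2 * K)) + (Cs / c) ^ 2 * M + M,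
    by positivity, fun η hη hηs hgag w hw => ?_⟩
  have hs1 : 1 ≤ s := by linarith
  set N := HsNorm s w
  have hgag_w : (gagliardoSqE (s - 1) (deriv w)).toReal ≤ N ^ 2 :=
    (gagliardo_le_HsNormSq s w).trans_eq (sq_HsNorm s w).symm
  have hL2 : ∫ x in I01, ‖w x‖ ^ 2 ≤ N ^ 2 :=
    (integral_sq_norm_le_HsNormSq s w).trans_eq (sq_HsNorm s w).symm
  calc Gmet s η w w
      ≤ 2 * (κ * ((gagliardoSqE (s - 1) (deriv w)).toReal +
          (Cs * N / c) ^ 2 * (gagliardoSqE (s - 1) (deriv η)).toReal)) +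
        (2 * s + 3) * (Cs * N / c) ^ 2 * (κ * ((gagliardoSqE (s - 1) (deriv η)).toReal +
          (M / c) ^ 2 * (gagliardoSqE (s - 1) (deriv η)).toReal)) +
        (Cs * N / c) ^ 2 * M + M * ∫ x in I01, ‖w x‖ ^ 2 := by
        refine (hη.Gmet_self_le hs1 hηs hw (hsup w hw)).trans ?_
        gcongr
        exacts [hη.toReal_RmuSqE_le hs1 hηs hw (hsup w hw),
          hη.toReal_RmuSqE_le hs1 hηs hηs hη.norm_deriv_le]
    _ ≤ 2 * (κ * (N ^ 2 + (Cs * N / c) ^ 2 * K)) +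
        (2 * s + 3) * (Cs * N / c) ^ 2 * (κ * (K + (M / c) ^ 2 * K)) +
        (Cs * N / c) ^ 2 * M + M * N ^ 2 := by gcongr
    _ = _ := by ring

end MetricBound

section Segments

variable {n : ℕ} {s : ℝ} {γ γ₀ γ₁ : ℝ → En n}

/-- The straight segment from `γ₁` to `γ₀` as a path in `𝓜`. -/
def segmentPath (h₁ : InHs s γ₁) (h₀ : InHs s γ₀)
    (hmem : ∀ t ∈ Icc (0 : ℝ) 1, InM s (AffineMap.lineMap γ₁ γ₀ t)) : C1Path s n where
  Γ := AffineMap.lineMap γ₁ γ₀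
  V _ := γ₀ - γ₁
  mem := hmem
  memV _ _ := h₀.sub h₁
  isDeriv t _ := by
    refine tendsto_const_nhds.congr' ?_
    filter_upwards [self_mem_nhdsWithin] with h hh
    rw [← HsNorm_zero (n := n) s]
    congr 1
    funext x
    have hincrement : AffineMap.lineMap γ₁ γ₀ (t + h) x - AffineMap.lineMap γ₁ γ₀ t x =
        h • (γ₀ x - γ₁ x) := by
      simp only [AffineMap.pi_lineMap_apply, AffineMap.lineMap_apply_module]
      module
    rw [hincrement, inv_smul_smul₀ hh.2, Pi.sub_apply, sub_self, Pi.zero_apply]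
  contV t _ := by
    simp only [sub_self]
    exact tendsto_const_nhds.congr fun _ => (HsNorm_zero s).symm

lemma geodDist_le_of_Gmet_lineMap_le {C : ℝ} (h₁ : InHs s γ₁) (h₀ : InHs s γ₀)
    (hmem : ∀ t ∈ Icc (0 : ℝ) 1, InM s (AffineMap.lineMap γ₁ γ₀ t))
    (hG : ∀ t ∈ Icc (0 : ℝ) 1, Gmet s (AffineMap.lineMap γ₁ γ₀ t) (γ₀ - γ₁) (γ₀ - γ₁) ≤
      C * HsNorm s (γ₀ - γ₁) ^ 2) :
    geodDist s γ₁ γ₀ ≤ ENNReal.ofReal (√C * HsNorm s (γ₁ - γ₀)) := by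
  rw [HsNorm_sub_comm h₁ h₀]
  have hspeed : ∀ t ∈ uIoc (0 : ℝ) 1,
      ‖√(Gmet s (AffineMap.lineMap γ₁ γ₀ t) (γ₀ - γ₁) (γ₀ - γ₁))‖ ≤
        √C * HsNorm s (γ₀ - γ₁) := fun t ht => by
    rw [uIoc_of_le zero_le_one] at ht
    rw [norm_of_nonneg (sqrt_nonneg _)]
    refine (sqrt_le_sqrt (hG t (Ioc_subset_Icc_self ht))).trans_eq ?_
    rw [sqrt_mul' C (sq_nonneg _), HsNorm, sqrt_sq (sqrt_nonneg _)]
  have hlen : pathLen (segmentPath h₁ h₀ hmem) ≤ √C * HsNorm s (γ₀ - γ₁) := by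
    refine (le_abs_self _).trans
      ((intervalIntegral.norm_integral_le_of_norm_le_const hspeed).trans_eq ?_)
    rw [sub_zero, abs_one, mul_one]
  exact (iInf₂_le (segmentPath h₁ h₀ hmem)
    ⟨AffineMap.lineMap_apply_zero _ _, AffineMap.lineMap_apply_one _ _⟩).trans
    (ENNReal.ofReal_le_ofReal hlen)

end Segments

section LocalBounds

variable {n : ℕ} {s : ℝ} {γ : ℝ → En n}

lemma exists_HsBall_uniformlyEmbedded (hs : 3 / 2 < s) {c M : ℝ} (hγ : UniformlyEmbedded c M γ)
    (hγs : InHs s γ) :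
    ∃ r > 0, ∀ η ∈ HsBall s γ r, UniformlyEmbedded (c / 2) (M + c / 2) η := by
  obtain ⟨Cs, hCs, hsup⟩ := exists_norm_deriv_le_mul_HsNorm hs n
  have hc := hγ.pos
  refine ⟨c / (2 * Cs), by positivity, fun η hη => hγ.perturb hη.1.1 hη.1.2.1 fun x => ?_⟩
  calc ‖deriv (η - γ) x‖ ≤ Cs * HsNorm s (η - γ) := hsup _ (hη.1.sub hγs) x
    _ ≤ Cs * (c / (2 * Cs)) := by
        gcongr
        exact hη.2.le
    _ = c / 2 := by field_simp

lemma exists_HsBall_Gmet_self_le (hs : 3 / 2 < s) (hγ : InM s γ) :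
    ∃ r > 0, ∃ C > 0, ∀ η ∈ HsBall s γ r,
      InM s η ∧ ∀ w, InHs s w → Gmet s η w w ≤ C * HsNorm s w ^ 2 := by
  obtain ⟨c, M, hemb⟩ := exists_uniformlyEmbedded_of_injOn hγ.1.1 hγ.1.2.1 hγ.2.1 hγ.2.2
  obtain ⟨r, hr, hball⟩ := exists_HsBall_uniformlyEmbedded hs hemb hγ.1
  have hc := hemb.pos
  have hM := hemb.bound_pos
  have hnorm := HsNormSq_nonneg s γ
  obtain ⟨C, hC, hmetric⟩ := exists_Gmet_self_le hs n (half_pos hc)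
    (show 0 < M + c / 2 by positivity) (show 0 ≤ 2 * HsNormSq s γ + 2 * r ^ 2 by positivity)
  refine ⟨r, hr, C, hC, fun η hη => ⟨(hball η hη).inM hη.1, hmetric η (hball η hη) hη.1 ?_⟩⟩
  have hdist : HsNormSq s (η - γ) ≤ r ^ 2 := ((sqrt_lt' hr).1 hη.2).le
  linarith [gagliardo_le_HsNormSq s η, HsNormSq_le_two_mul_add hη.1 hγ.1]

end LocalBounds

/-- local upper bound for `d_G` by the `H^s` distance: for every
`γ ∈ 𝓜` there are `r > 0` and `C > 0` such that the `H^s`-ball `B_r(γ)` is contained in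
`𝓜` and `d_G(γ₁,γ₀) ≤ C·‖γ₁ − γ₀‖_{H^s}` for all `γ₀, γ₁ ∈ B_r(γ)`; together with the
converse bound this makes the identity `(𝓜,d_G) → (𝓜,‖·‖_{H^s})` locally bi-Lipschitz. -/
theorem statement14 (s : ℝ) (hs : s ∈ Set.Ioo (3 / 2 : ℝ) 2) (n : ℕ) (hn : 2 ≤ n)
    (γ : ℝ → En n) (hγ : InM s γ) :
    ∃ r C : ℝ, 0 < r ∧ 0 < C ∧
      (∀ η : ℝ → En n, InHs s η → HsNorm s (fun x => η x - γ x) < r → InM s η) ∧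
      ∀ γ₀ γ₁ : ℝ → En n, InHs s γ₀ → InHs s γ₁ →
        HsNorm s (fun x => γ₀ x - γ x) < r → HsNorm s (fun x => γ₁ x - γ x) < r →
        geodDist s γ₁ γ₀ ≤ ENNReal.ofReal (C * HsNorm s (fun x => γ₁ x - γ₀ x)) := by
  obtain ⟨r, hr, C, hC, hball⟩ := exists_HsBall_Gmet_self_le hs.1 hγ
  refine ⟨r, √C, hr, sqrt_pos.2 hC, fun η hη hlt => (hball η ⟨hη, hlt⟩).1,
    fun γ₀ γ₁ h₀ h₁ hlt₀ hlt₁ => ?_⟩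
  have hsegment : ∀ t ∈ Icc (0 : ℝ) 1, AffineMap.lineMap γ₁ γ₀ t ∈ HsBall s γ r :=
    fun t ht => (convex_HsBall hγ.1 hr).lineMap_mem ⟨h₁, hlt₁⟩ ⟨h₀, hlt₀⟩ ht
  exact geodDist_le_of_Gmet_lineMap_le h₁ h₀ (fun t ht => (hball _ (hsegment t ht)).1)
    fun t ht => (hball _ (hsegment t ht)).2 _ (h₀.sub h₁)
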